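/- Let t_{n,k} denote the number of α-equivalence classes of linear lambda terms with n total applications and abstractions and k free variables. Then t_{0,k} = 1 if k = 1 and t_{0,k} = 0 otherwise, and for all n ≥ 0 and k ≥ 0: t_{n+1,k} = Σ_{n₁+n₂=n} Σ_{k₁+k₂=k} binomial(k,k₁)·t_{n₁,k₁}·t_{n₂,k₂} + t_{n,k+1}. Equivalently, the exponential-type generating function L(z,x) = Σ_{n,k} t_{n,k} x^k z^n / k! satisfies L(z,x) = x + z·L(z,x)² + z·∂L/∂x(z,x). -/

import Mathlib

/-! ## Lambda terms and linearity -/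

inductive Term : Type
  | var : ℕ → Term
  | app : Term → Term → Term
  | lam : ℕ → Term → Term
deriving DecidableEq

namespace Term

/-- total number of applications and abstractions -/
def size : Term → ℕ
  | var _ => 0
  | app t u => size t + size u + 1
  | lam _ t => size t + 1

def apps : Term → ℕ
  | var _ => 0
  | app t u => apps t + apps u + 1
  | lam _ t => apps t

def lams : Term → ℕ
  | var _ => 0
  | app t u => lams t + lams u
  | lam _ t => lams t + 1

/-- all variable names occurring in a term (free, bound or binding) -/
def varsList : Term → List ℕ
  | var z => [z]
  | app t u => varsList t ++ varsList u
  | lam z t => z :: varsList t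

/-- the list of free variables -/
def freeList : Term → List ℕ
  | var z => [z]
  | app t u => freeList t ++ freeList u
  | lam z t => (freeList t).filter (fun y => y ≠ z)

/-- the list of bound (binder) variables -/
def boundVars : Term → List ℕ
  | var _ => []
  | app t u => boundVars t ++ boundVars u
  | lam z t => z :: boundVars t

/-- rename the free occurrences of `x` to `y` -/
def rename (x y : ℕ) : Term → Term
  | var z => if z = x then var y else var z
  | app t u => app (rename x y t) (rename x y u)
  | lam z t => if z = x then lam z t else lam z (rename x y t)

/-- substitution of `u` for the free occurrences of `x` -/
def subst (u : Term) (x : ℕ) : Term → Term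
  | var z => if z = x then u else var z
  | app t₁ t₂ => app (subst u x t₁) (subst u x t₂)
  | lam z t => if z = x then lam z t else lam z (subst u x t)

end Term

/-- the linearity relation `Γ ⊢ t` between contexts and lambda terms -/
inductive Linear : List ℕ → Term → Prop
  | var (x : ℕ) : Linear [x] (.var x)
  | app {Γ Δ : List ℕ} {t u : Term} : Linear Γ t → Linear Δ u →
      (Γ ++ Δ).Nodup → Linear (Γ ++ Δ) (.app t u)
  | lam {Γ : List ℕ} {x : ℕ} {t : Term} : Linear (Γ ++ [x]) t → Linear Γ (.lam x t)
  | exch {Γ Δ : List ℕ} {x y : ℕ} {t : Term} :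
      Linear (Γ ++ y :: x :: Δ) t → Linear (Γ ++ x :: y :: Δ) t

/-! ## Alpha equivalence -/

/-- change of a bound variable somewhere inside a term -/
inductive BoundStep : Term → Term → Prop
  | here {x y : ℕ} {u : Term} : y ∉ u.varsList →
      BoundStep (.lam x u) (.lam y (u.rename x y))
  | appL {t t' u : Term} : BoundStep t t' → BoundStep (.app t u) (.app t' u)
  | appR {t u u' : Term} : BoundStep u u' → BoundStep (.app t u) (.app t u')
  | lam {x : ℕ} {t t' : Term} : BoundStep t t' → BoundStep (.lam x t) (.lam x t')

/-- a single change of a free or bound variable -/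
inductive AlphaStep : List ℕ × Term → List ℕ × Term → Prop
  | free {Γ₁ Γ₂ : List ℕ} {x y : ℕ} {t : Term} :
      y ∉ t.varsList → y ∉ Γ₁ → y ∉ Γ₂ →
      AlphaStep (Γ₁ ++ x :: Γ₂, t) (Γ₁ ++ y :: Γ₂, t.rename x y)
  | bound {Γ : List ℕ} {t t' : Term} : BoundStep t t' → AlphaStep (Γ, t) (Γ, t')

/-- alpha equivalence of linear lambda terms-in-context -/
def Alpha : List ℕ × Term → List ℕ × Term → Prop := Relation.EqvGen AlphaStep


/-- `tnk n k` is the number of alpha-equivalence classes of linear lambda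
terms with `n` total applications and abstractions and `k` free variables -/
noncomputable def tnk (n k : ℕ) : ℕ :=
  Nat.card (Quot (fun a b :
    {p : List ℕ × Term // Linear p.1 p.2 ∧ Term.size p.2 = n ∧ p.1.length = k} =>
      Alpha a.val b.val))


/-! ## De Bruijn terms -/

inductive DB : Type
  | var : ℕ → DB
  | app : DB → DB → DB
  | lam : DB → DB
deriving DecidableEq

namespace DB

def size : DB → ℕ
  | var _ => 0
  | app t u => size t + size u + 1
  | lam t => size t + 1

/-- `t` is linear with set of free indices exactly `S` -/
def DLin : DB → Finset ℕ → Prop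
  | var i, S => S = {i}
  | app t u, S => ∃ A, A ⊆ S ∧ DLin t A ∧ DLin u (S \ A)
  | lam t, S => DLin t (insert 0 (S.image Nat.succ))

theorem shift_inj {A B : Finset ℕ}
    (h : insert 0 (A.image Nat.succ) = insert 0 (B.image Nat.succ)) : A = B := by
  ext a
  have := congrArg (fun S => a + 1 ∈ S) h
  simpa using this

theorem DLin.unique {t : DB} : ∀ {A B : Finset ℕ}, DLin t A → DLin t B → A = B := by
  induction t with
  | var i => intro A B hA hB; simp only [DLin] at hA hB; rw [hA, hB]
  | app t u iht ihu =>
    rintro A B ⟨A', h1, h2, h3⟩ ⟨B', k1, k2, k3⟩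
    have e1 := iht h2 k2
    subst e1
    have e2 := ihu h3 k3
    rw [← Finset.sdiff_union_of_subset h1, e2, Finset.sdiff_union_of_subset k1]
  | lam t ih =>
    intro A B hA hB
    exact shift_inj (ih hA hB)

end DB

/-- the recurrence, as a definition -/
def cnt : ℕ → ℕ → ℕ
  | 0, k => if k = 1 then 1 else 0
  | n + 1, k => (∑ i : Fin (n + 1), ∑ j ∈ Finset.range (k + 1),
      Nat.choose k j * cnt i j * cnt (n - i) (k - j)) + cnt n (k + 1)
termination_by n => n
decreasing_by all_goals omega

theorem card_shift (S : Finset ℕ) : (insert 0 (S.image Nat.succ)).card = S.card + 1 := by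
  rw [Finset.card_insert_of_notMem (by simp), Finset.card_image_of_injective _ Nat.succ_injective]

theorem exists_enum (n : ℕ) : ∀ S : Finset ℕ, ∃ F : Finset DB,
    (∀ t, t ∈ F ↔ t.size = n ∧ t.DLin S) ∧ F.card = cnt n S.card := by
  induction n using Nat.strong_induction_on with
  | _ n ih =>
    intro S
    match n, ih with
    | 0, ih =>
      by_cases h : S.card = 1
      · obtain ⟨a, rfl⟩ := Finset.card_eq_one.mp h
        refine ⟨{DB.var a}, ?_, by simp [cnt]⟩
        intro t
        cases t with
        | var i => simp [DB.size, DB.DLin, eq_comm]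
        | app t u => simp [DB.size]
        | lam t => simp [DB.size]
      · refine ⟨∅, ?_, by simp [cnt, h]⟩
        intro t
        cases t with
        | var i =>
          simp only [Finset.notMem_empty, DB.size, DB.DLin, false_iff, true_and]
          rintro rfl
          simp at h
        | app t u => simp [DB.size]
        | lam t => simp [DB.size]
    | n + 1, ih =>
      choose! F hF hc using ih
      let P : ℕ × Finset ℕ → Finset DB := fun p =>
        (F p.1 p.2 ×ˢ F (n - p.1) (S \ p.2)).image (fun q => DB.app q.1 q.2)
      let G := (Finset.range (n + 1) ×ˢ S.powerset).biUnion P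
      let H := (F n (insert 0 (S.image Nat.succ))).image DB.lam
      refine ⟨G ∪ H, ?_, ?_⟩
      · intro t
        cases t with
        | var i => simp [G, H, P, DB.size]
        | app t u =>
          simp only [G, H, P, Finset.mem_union, Finset.mem_biUnion, Finset.mem_product,
            Finset.mem_range, Finset.mem_powerset, Finset.mem_image, DB.app.injEq, Prod.exists,
            reduceCtorEq, and_false, exists_false, or_false, DB.size, DB.DLin]
          constructor
          · rintro ⟨i, A, ⟨hi, hA⟩, t', u', ⟨h1, h2⟩, rfl, rfl⟩
            rw [hF i hi] at h1
            rw [hF (n - i) (by omega)] at h2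
            exact ⟨by omega, A, hA, h1.2, h2.2⟩
          · rintro ⟨hs, A, hA, h1, h2⟩
            refine ⟨t.size, A, ⟨by omega, hA⟩, t, u, ⟨?_, ?_⟩, rfl, rfl⟩
            · rw [hF _ (by omega)]; exact ⟨rfl, h1⟩
            · rw [hF _ (by omega)]; exact ⟨by omega, h2⟩
        | lam t =>
          simp [G, H, P, DB.size, DB.DLin, hF n (Nat.lt_succ_self n)]
      · have hdisj : Disjoint G H := by
          rw [Finset.disjoint_left]
          intro t hG hH
          simp only [G, H, P, Finset.mem_biUnion, Finset.mem_image] at hG hH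
          obtain ⟨_, _, _, _, rfl⟩ := hG
          obtain ⟨_, _, h⟩ := hH
          cases h
        have hH : H.card = cnt n (S.card + 1) := by
          rw [Finset.card_image_of_injective _ (fun a b h => by cases h; rfl),
            hc n (Nat.lt_succ_self n), card_shift]
        have hG : G.card = ∑ i ∈ Finset.range (n + 1), ∑ A ∈ S.powerset,
            cnt i A.card * cnt (n - i) (S.card - A.card) := by
          rw [Finset.card_biUnion, Finset.sum_product]
          · refine Finset.sum_congr rfl fun i hi => Finset.sum_congr rfl fun A hA => ?_
            rw [Finset.mem_range] at hi
            rw [Finset.mem_powerset] at hA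
            rw [Finset.card_image_of_injective _ (fun a b h => by
              obtain ⟨a1, a2⟩ := a; obtain ⟨b1, b2⟩ := b; cases h; rfl), Finset.card_product,
              hc i hi, hc (n - i) (by omega), Finset.card_sdiff_of_subset hA]
          · rintro ⟨i, A⟩ hp ⟨j, B⟩ hq hne
            show Disjoint (P (i, A)) (P (j, B))
            rw [Finset.disjoint_left]
            intro t h1 h2
            simp only [Finset.mem_coe, Finset.mem_product, Finset.mem_range] at hp hq
            simp only [P, Finset.mem_image, Finset.mem_product] at h1 h2
            obtain ⟨⟨a, b⟩, ⟨ha, -⟩, rfl⟩ := h1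
            obtain ⟨⟨a', b'⟩, ⟨ha', -⟩, h⟩ := h2
            cases h
            rw [hF i hp.1] at ha
            rw [hF j hq.1] at ha'
            exact hne (by rw [← ha.1, ← ha'.1, ha.2.unique ha'.2])
        rw [Finset.card_union_of_disjoint hdisj, hH, hG, cnt, Finset.sum_range]
        congr 1
        refine Finset.sum_congr rfl fun i _ => ?_
        rw [Finset.sum_powerset_apply_card
          (fun m => cnt i m * cnt (n - i) (S.card - m))]
        refine Finset.sum_congr rfl fun j _ => ?_
        simp [mul_assoc]

/-! ## Basic facts about the linearity relation -/

theorem Linear.perm_aux {t : Term} {l l' : List ℕ} (h : l.Perm l') :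
    ∀ Γ : List ℕ, Linear (Γ ++ l) t → Linear (Γ ++ l') t := by
  induction h with
  | nil => exact fun _ h => h
  | cons a _ ih =>
    intro Γ hΓ
    have := ih (Γ ++ [a]) (by simpa using hΓ)
    simpa using this
  | swap a b l => intro Γ hΓ; exact Linear.exch hΓ
  | trans _ _ ih1 ih2 => intro Γ hΓ; exact ih2 Γ (ih1 Γ hΓ)

theorem Linear.perm {t : Term} {l l' : List ℕ} (h : l.Perm l') (hl : Linear l t) :
    Linear l' t := Linear.perm_aux h [] hl

theorem Linear.nodup {Γ : List ℕ} {t : Term} (h : Linear Γ t) : Γ.Nodup := by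
  induction h with
  | var x => simp
  | app _ _ h _ _ => exact h
  | lam _ ih => exact (List.nodup_append.mp ih).1
  | @exch Γ Δ x y t _ ih =>
    exact ((List.Perm.swap x y Δ).append_left Γ).nodup_iff.mp ih

namespace Term

def Good : Term → Prop
  | var _ => True
  | app t u => Good t ∧ Good u
  | lam z t => Good t ∧ (freeList t).count z = 1

end Term

theorem linear_iff (t : Term) : ∀ Γ : List ℕ,
    Linear Γ t ↔ t.Good ∧ Γ.Nodup ∧ Γ.Perm t.freeList := by
  intro Γ
  constructor
  · intro h
    refine ⟨?_, h.nodup, ?_⟩ <;> revert h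
    · suffices H : Linear Γ t → t.Good ∧ Γ.Perm t.freeList from fun h => (H h).1
      intro h
      induction h with
      | var x => simp [Term.Good, Term.freeList]
      | app _ _ h ih1 ih2 => exact ⟨⟨ih1.1, ih2.1⟩, ih1.2.append ih2.2⟩
      | @lam Γ x t h ih =>
        have hn := h.nodup
        refine ⟨⟨ih.1, ?_⟩, ?_⟩
        · rw [← ih.2.count_eq]
          exact List.count_eq_one_of_mem hn (by simp)
        · have := ih.2.filter (fun y => y ≠ x)
          refine List.Perm.trans ?_ this
          rw [List.filter_append]
          have hx : ∀ a ∈ Γ, a ≠ x := by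
            rintro a ha rfl
            rw [List.nodup_append] at hn
            exact hn.2.2 _ ha _ (by simp) rfl
          rw [List.filter_eq_self.mpr (by simpa using hx)]
          simp
      | @exch Γ Δ x y t _ ih =>
        exact ⟨ih.1, ((List.Perm.swap y x Δ).append_left Γ).trans ih.2⟩
    · intro h
      induction h with
      | var x => simp [Term.freeList]
      | app _ _ h ih1 ih2 => exact ih1.append ih2
      | @lam Γ x t h ih =>
        have hn := h.nodup
        have := ih.filter (fun y => y ≠ x)
        refine List.Perm.trans ?_ this
        rw [List.filter_append]
        have hx : ∀ a ∈ Γ, a ≠ x := by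
          rintro a ha rfl
          rw [List.nodup_append] at hn
          exact hn.2.2 _ ha _ (by simp) rfl
        rw [List.filter_eq_self.mpr (by simpa using hx)]
        simp
      | @exch Γ Δ x y t _ ih =>
        exact ((List.Perm.swap y x Δ).append_left Γ).trans ih
  · induction t generalizing Γ with
    | var x =>
      rintro ⟨-, -, h⟩
      rw [Term.freeList, List.perm_singleton] at h
      subst h
      exact Linear.var x
    | app t u iht ihu =>
      rintro ⟨⟨h1, h2⟩, hn, hp⟩
      have hn' := hp.nodup_iff.mp hn
      rw [Term.freeList] at hn' hp
      have hn2 := List.nodup_append.mp hn'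
      exact Linear.perm hp.symm (Linear.app (iht _ ⟨h1, hn2.1, List.Perm.refl _⟩)
        (ihu _ ⟨h2, hn2.2.1, List.Perm.refl _⟩) hn')
    | lam x t ih =>
      rintro ⟨⟨h1, h2⟩, hn, hp⟩
      rw [Term.freeList] at hp
      have hx : x ∉ Γ := by
        intro hx
        have := hp.mem_iff.mp hx
        simp at this
      refine Linear.lam (ih _ ⟨h1, ?_, ?_⟩)
      · rw [List.nodup_append]
        exact ⟨hn, by simp, by rintro a ha b hb rfl; simp at hb; subst hb; exact hx ha⟩
      · rw [List.perm_iff_count]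
        intro a
        by_cases ha : a = x
        · subst ha
          rw [h2, List.count_append, List.count_eq_zero_of_not_mem hx]
          simp
        · rw [List.count_append, hp.count_eq, List.count_filter (by simpa using ha)]
          simp [List.count_singleton, Ne.symm ha]

/-! ## Renaming -/

/-- renaming on names -/
def rn (x y z : ℕ) : ℕ := if z = x then y else z

theorem freeList_sub (t : Term) : ∀ z ∈ t.freeList, z ∈ t.varsList := by
  induction t with
  | var x => simp [Term.freeList, Term.varsList]
  | app t u h1 h2 =>
    intro z hz
    simp only [Term.freeList, Term.varsList, List.mem_append] at hz ⊢
    exact hz.imp (h1 z) (h2 z)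
  | lam x t h =>
    intro z hz
    simp only [Term.freeList, Term.varsList, List.mem_filter, List.mem_cons] at hz ⊢
    exact Or.inr (h z hz.1)

theorem map_rn_of_notMem {x y : ℕ} {l : List ℕ} (h : x ∉ l) : l.map (rn x y) = l := by
  induction l with
  | nil => rfl
  | cons a l ih => grind [rn]

theorem filter_map_rn {x y w : ℕ} (hy : y ≠ w) (hx : w ≠ x) (l : List ℕ) :
    (l.map (rn x y)).filter (fun z => z ≠ w) = (l.filter (fun z => z ≠ w)).map (rn x y) := by
  induction l with
  | nil => rfl
  | cons a l ih => grind [rn]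

theorem filter_map_rn' {x y : ℕ} (l : List ℕ) (hy : y ∉ l) :
    (l.map (rn x y)).filter (fun z => z ≠ y) = l.filter (fun z => z ≠ x) := by
  induction l with
  | nil => rfl
  | cons a l ih => grind [rn]

theorem count_map_rn {x y w : ℕ} (hy : y ≠ w) (hx : w ≠ x) (l : List ℕ) :
    (l.map (rn x y)).count w = l.count w := by
  induction l with
  | nil => rfl
  | cons a l ih => grind [rn]

theorem count_map_rn' {x y : ℕ} (l : List ℕ) (hy : y ∉ l) :
    (l.map (rn x y)).count y = l.count x := by
  induction l with
  | nil => rfl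
  | cons a l ih => grind [rn]

theorem map_rn_rn {x y : ℕ} (l : List ℕ) (hy : y ∉ l) :
    (l.map (rn x y)).map (rn y x) = l := by
  induction l with
  | nil => rfl
  | cons a l ih => grind [rn]

theorem freeList_rename {x y : ℕ} (t : Term) (hy : y ∉ t.varsList) :
    (t.rename x y).freeList = t.freeList.map (rn x y) := by
  induction t with
  | var z =>
    simp only [Term.rename, rn]
    split <;> simp_all [Term.freeList, rn]
  | app t u h1 h2 =>
    simp only [Term.varsList, List.mem_append, not_or] at hy
    simp [Term.rename, Term.freeList, h1 hy.1, h2 hy.2]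
  | lam w t h =>
    simp only [Term.varsList, List.mem_cons, not_or] at hy
    simp only [Term.rename]
    split
    · rename_i hw
      subst hw
      rw [map_rn_of_notMem]
      simp [Term.freeList]
    · rename_i hw
      simp only [Term.freeList]
      rw [h hy.2, filter_map_rn hy.1 hw]

theorem good_rename {x y : ℕ} (t : Term) (hy : y ∉ t.varsList) :
    (t.rename x y).Good ↔ t.Good := by
  induction t with
  | var z =>
    simp only [Term.rename]
    split <;> simp [Term.Good]
  | app t u h1 h2 =>
    simp only [Term.varsList, List.mem_append, not_or] at hy
    simp [Term.rename, Term.Good, h1 hy.1, h2 hy.2]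
  | lam w t h =>
    simp only [Term.varsList, List.mem_cons, not_or] at hy
    simp only [Term.rename]
    split
    · rfl
    · rename_i hw
      simp only [Term.Good]
      rw [h hy.2, freeList_rename _ hy.2, count_map_rn hy.1 hw]

theorem size_rename {x y : ℕ} (t : Term) : (t.rename x y).size = t.size := by
  induction t with
  | var z =>
    simp only [Term.rename]
    split <;> simp [Term.size]
  | app t u h1 h2 => simp [Term.rename, Term.size, h1, h2]
  | lam w t h =>
    simp only [Term.rename]
    split <;> simp [Term.size, h]

theorem varsList_rename {x y : ℕ} (t : Term) :
    ∀ z ∈ (t.rename x y).varsList, z = y ∨ z ∈ t.varsList := by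
  induction t with
  | var w =>
    simp only [Term.rename]
    split <;> simp_all [Term.varsList]
  | app t u h1 h2 =>
    intro z hz
    simp only [Term.rename, Term.varsList, List.mem_append] at hz ⊢
    rcases hz with hz | hz
    · have := h1 z hz; tauto
    · have := h2 z hz; tauto
  | lam w t h =>
    intro z
    simp only [Term.rename]
    split
    · exact Or.inr
    · simp only [Term.varsList, List.mem_cons]
      rintro (hz | hz)
      · tauto
      · have := h z hz; tauto

/-! ## Translation to de Bruijn terms -/

def up (x : ℕ) (e : ℕ → ℕ) : ℕ → ℕ := fun z => if z = x then 0 else e z + 1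

def nf : (ℕ → ℕ) → Term → DB
  | e, .var x => .var (e x)
  | e, .app t u => .app (nf e t) (nf e u)
  | e, .lam x t => .lam (nf (up x e) t)

theorem size_nf (t : Term) : ∀ e, (nf e t).size = t.size := by
  induction t with
  | var x => intro e; rfl
  | app t u h1 h2 => intro e; simp [nf, DB.size, Term.size, h1, h2]
  | lam x t h => intro e; simp [nf, DB.size, Term.size, h]

theorem nf_congr (t : Term) : ∀ e e' : ℕ → ℕ, (∀ z ∈ t.varsList, e z = e' z) →
    nf e t = nf e' t := by
  induction t with
  | var x => intro e e' h; simp [nf, h x (by simp [Term.varsList])]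
  | app t u h1 h2 =>
    intro e e' h
    simp only [Term.varsList, List.mem_append] at h
    simp only [nf]
    rw [h1 e e' (fun z hz => h z (Or.inl hz)), h2 e e' (fun z hz => h z (Or.inr hz))]
  | lam x t ih =>
    intro e e' h
    simp only [Term.varsList, List.mem_cons] at h
    simp only [nf]
    rw [ih (up x e) (up x e')]
    intro z hz
    simp [up, h z (Or.inr hz)]

theorem nf_rename {x y : ℕ} (t : Term) (hy : y ∉ t.varsList) : ∀ e e' : ℕ → ℕ,
    e' y = e x → (∀ z ∈ t.varsList, z ≠ x → e' z = e z) →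
    nf e' (t.rename x y) = nf e t := by
  induction t with
  | var w =>
    intro e e' h1 h2
    simp only [Term.varsList, List.mem_singleton] at h2
    simp only [Term.rename]
    split
    · simp_all [nf]
    · rename_i hw
      simp [nf, h2 w rfl hw]
  | app t u iht ihu =>
    intro e e' h1 h2
    simp only [Term.varsList, List.mem_append, not_or] at hy h2
    simp only [Term.rename, nf]
    rw [iht hy.1 e e' h1 (fun z hz => h2 z (Or.inl hz)),
      ihu hy.2 e e' h1 (fun z hz => h2 z (Or.inr hz))]
  | lam w t ih =>
    intro e e' h1 h2
    simp only [Term.varsList, List.mem_cons, not_or] at hy h2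
    simp only [Term.rename]
    split
    · rename_i hw
      subst hw
      simp only [nf]
      rw [nf_congr t (up w e') (up w e)]
      intro z hz
      by_cases hzw : z = w
      · simp [up, hzw]
      · simp [up, hzw, h2 z (Or.inr hz) hzw]
    · rename_i hw
      simp only [nf]
      rw [ih hy.2 (up w e) (up w e')]
      · simp [up, hy.1, Ne.symm hw, h1]
      · intro z hz hzx
        simp [up, h2 z (Or.inr hz) hzx]

theorem BoundStep.inv {t t' : Term} (h : BoundStep t t') :
    t.freeList = t'.freeList ∧ (t.Good ↔ t'.Good) ∧ ∀ e, nf e t = nf e t' := by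
  induction h with
  | @here x y u hy =>
    have hy' : y ∉ u.freeList := fun h => hy (freeList_sub u y h)
    refine ⟨?_, ?_, ?_⟩
    · simp only [Term.freeList]
      rw [freeList_rename _ hy, filter_map_rn' _ hy']
    · simp only [Term.Good]
      rw [good_rename _ hy, freeList_rename _ hy, count_map_rn' _ hy']
    · intro e
      simp only [nf]
      rw [nf_rename u hy (up x e) (up y e)]
      · simp [up]
      · intro z hz hzx
        have : z ≠ y := by rintro rfl; exact hy hz
        simp [up, hzx, this]
  | appL _ ih => simp [Term.freeList, Term.Good, nf, ih]
  | appR _ ih => simp [Term.freeList, Term.Good, nf, ih]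
  | lam _ ih => simp [Term.freeList, Term.Good, nf, ih]

/-- the canonical form of a term in context -/
def canon (p : List ℕ × Term) : DB := nf (fun z => p.1.idxOf z) p.2

theorem nodup_swap_aux {Γ₁ Γ₂ : List ℕ} {x : ℕ} :
    (Γ₁ ++ x :: Γ₂).Nodup ↔ (Γ₁ ++ Γ₂).Nodup ∧ x ∉ Γ₁ ∧ x ∉ Γ₂ := by
  rw [List.nodup_middle, List.nodup_cons, List.mem_append]
  tauto

theorem map_rn_mid {Γ₁ Γ₂ : List ℕ} {x y : ℕ} (h1 : x ∉ Γ₁) (h2 : x ∉ Γ₂) :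
    (Γ₁ ++ x :: Γ₂).map (rn x y) = Γ₁ ++ y :: Γ₂ := by
  rw [List.map_append, List.map_cons, map_rn_of_notMem h1, map_rn_of_notMem h2]
  simp [rn]

theorem idxOf_mid {Γ₁ Γ₂ : List ℕ} {x y : ℕ} (h1 : x ∉ Γ₁) (h2 : y ∉ Γ₁) :
    (Γ₁ ++ y :: Γ₂).idxOf y = (Γ₁ ++ x :: Γ₂).idxOf x := by
  rw [List.idxOf_append_of_notMem h1, List.idxOf_append_of_notMem h2]
  simp

theorem idxOf_mid' {Γ₁ Γ₂ : List ℕ} {x y z : ℕ} (h1 : z ≠ x) (h2 : z ≠ y) :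
    (Γ₁ ++ y :: Γ₂).idxOf z = (Γ₁ ++ x :: Γ₂).idxOf z := by
  by_cases hz : z ∈ Γ₁
  · rw [List.idxOf_append_of_mem hz, List.idxOf_append_of_mem hz]
  · rw [List.idxOf_append_of_notMem hz, List.idxOf_append_of_notMem hz,
      List.idxOf_cons_ne _ h1.symm, List.idxOf_cons_ne _ h2.symm]

theorem canon_free {Γ₁ Γ₂ : List ℕ} {x y : ℕ} {t : Term} (hy : y ∉ t.varsList)
    (h1 : x ∉ Γ₁) (h2 : y ∉ Γ₁) :
    canon (Γ₁ ++ y :: Γ₂, t.rename x y) = canon (Γ₁ ++ x :: Γ₂, t) := by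
  refine nf_rename t hy _ _ (idxOf_mid h1 h2) ?_
  intro z hz hzx
  exact idxOf_mid' hzx (by rintro rfl; exact hy hz)

theorem AlphaStep.inv {p q : List ℕ × Term} (h : AlphaStep p q) :
    (Linear p.1 p.2 ↔ Linear q.1 q.2) ∧ (Linear p.1 p.2 → canon p = canon q) := by
  cases h with
  | @free Γ₁ Γ₂ x y t hy h1 h2 =>
    have hy' : y ∉ t.freeList := fun h => hy (freeList_sub t y h)
    refine ⟨?_, ?_⟩
    · simp only [linear_iff]
      rw [good_rename _ hy, freeList_rename _ hy, nodup_swap_aux, nodup_swap_aux]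
      constructor
      · rintro ⟨hg, ⟨hn, hx1, hx2⟩, hp⟩
        refine ⟨hg, ⟨hn, h1, h2⟩, ?_⟩
        rw [← map_rn_mid (y := y) hx1 hx2]
        exact hp.map _
      · rintro ⟨hg, ⟨hn, -, -⟩, hp⟩
        have hx : x ≠ y → x ∉ Γ₁ ++ y :: Γ₂ := by
          intro hne hx
          have := hp.mem_iff.mp hx
          rw [List.mem_map] at this
          obtain ⟨a, ha, hax⟩ := this
          simp only [rn] at hax
          split at hax
          · exact hne hax.symm
          · contradiction
        have hx' : x ∉ Γ₁ ∧ x ∉ Γ₂ := by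
          by_cases hne : x = y
          · subst hne; exact ⟨h1, h2⟩
          · have := hx hne
            simp only [List.mem_append, List.mem_cons] at this
            tauto
        refine ⟨hg, ⟨hn, hx'⟩, ?_⟩
        have := hp.map (rn y x)
        rwa [map_rn_mid h1 h2, map_rn_rn _ hy'] at this
    · intro hl
      have := nodup_swap_aux.mp hl.nodup
      exact (canon_free hy this.2.1 h1).symm
  | bound hb =>
    obtain ⟨h1, h2, h3⟩ := hb.inv
    refine ⟨?_, fun _ => h3 _⟩
    simp only [linear_iff]
    rw [h1, h2]

theorem Alpha.inv {p q : List ℕ × Term} (h : Alpha p q) :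
    (Linear p.1 p.2 ↔ Linear q.1 q.2) ∧ (Linear p.1 p.2 → canon p = canon q) := by
  induction h with
  | rel _ _ h => exact h.inv
  | refl _ => simp
  | symm _ _ _ ih => exact ⟨ih.1.symm, fun h => (ih.2 (ih.1.mpr h)).symm⟩
  | trans _ _ _ _ _ ih1 ih2 =>
    exact ⟨ih1.1.trans ih2.1, fun h => (ih1.2 h).trans (ih2.2 (ih1.1.mp h))⟩

/-! ## Injectivity -/

theorem eqvGen_map {α β : Type*} {r : α → α → Prop} {s : β → β → Prop} (f : α → β)
    (hf : ∀ a b, r a b → s (f a) (f b)) {a b : α} (h : Relation.EqvGen r a b) :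
    Relation.EqvGen s (f a) (f b) := by
  induction h with
  | rel _ _ h => exact .rel _ _ (hf _ _ h)
  | refl _ => exact .refl _
  | symm _ _ _ ih => exact .symm _ _ ih
  | trans _ _ _ _ _ ih1 ih2 => exact .trans _ _ _ ih1 ih2

theorem exists_fresh (l : List ℕ) : ∃ z, z ∉ l := by
  obtain ⟨z, hz⟩ := Infinite.exists_notMem_finset l.toFinset
  exact ⟨z, by simpa using hz⟩

theorem free_rename_sub {x z : ℕ} {u : Term} {S : Set ℕ} (hz : z ∉ u.varsList)
    (hS : ∀ a ∈ (Term.lam x u).freeList, a ∈ S) :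
    ∀ a ∈ (u.rename x z).freeList, a ∈ insert z S := by
  intro a ha
  rw [freeList_rename _ hz, List.mem_map] at ha
  obtain ⟨b, hb, rfl⟩ := ha
  simp only [rn]
  split
  · simp
  · rename_i hbx
    exact Set.mem_insert_of_mem _ (hS b (by simp [Term.freeList, hb, hbx]))

theorem up_injOn {e : ℕ → ℕ} {S : Set ℕ} (he : Set.InjOn e S) (z : ℕ) :
    Set.InjOn (up z e) (insert z S) := by
  intro a ha b hb hab
  simp only [up] at hab
  by_cases h1 : a = z <;> by_cases h2 : b = z <;> simp_all
  exact he ha hb hab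

theorem nf_inj (n : ℕ) : ∀ (t t' : Term) (e : ℕ → ℕ) (S : Set ℕ), t.size = n →
    Set.InjOn e S → (∀ a ∈ t.freeList, a ∈ S) → (∀ a ∈ t'.freeList, a ∈ S) →
    nf e t = nf e t' → Relation.EqvGen BoundStep t t' := by
  induction n using Nat.strong_induction_on with
  | _ n ih =>
    intro t t' e S hn he hS hS' h
    cases t with
    | var x =>
      cases t' with
      | var y =>
        simp only [nf, DB.var.injEq] at h
        have := he (hS x (by simp [Term.freeList])) (hS' y (by simp [Term.freeList])) h
        subst this
        exact .refl _
      | app t' u' => simp [nf] at h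
      | lam y u' => simp [nf] at h
    | app t u =>
      cases t' with
      | var y => simp [nf] at h
      | app t' u' =>
        simp only [nf, DB.app.injEq] at h
        simp only [Term.freeList, List.mem_append] at hS hS'
        simp only [Term.size] at hn
        have e1 := ih t.size (by omega) t t' e S rfl he (fun a ha => hS a (Or.inl ha))
          (fun a ha => hS' a (Or.inl ha)) h.1
        have e2 := ih u.size (by omega) u u' e S rfl he (fun a ha => hS a (Or.inr ha))
          (fun a ha => hS' a (Or.inr ha)) h.2
        exact .trans _ _ _ (eqvGen_map (fun s => Term.app s u) (fun _ _ h => .appL h) e1)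
          (eqvGen_map (fun s => Term.app t' s) (fun _ _ h => .appR h) e2)
      | lam y u' => simp [nf] at h
    | lam x u =>
      cases t' with
      | var y => simp [nf] at h
      | app t' u' => simp [nf] at h
      | lam x' u' =>
        simp only [nf, DB.lam.injEq] at h
        simp only [Term.size] at hn
        obtain ⟨z, hz⟩ := exists_fresh (u.varsList ++ u'.varsList)
        simp only [List.mem_append, not_or] at hz
        have key : ∀ (x : ℕ) (u : Term), z ∉ u.varsList →
            nf (up z e) (u.rename x z) = nf (up x e) u := by
          intro x u hz
          refine nf_rename u hz _ _ (by simp [up]) ?_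
          intro w hw hwx
          have : w ≠ z := by rintro rfl; exact hz hw
          simp [up, this, hwx]
        have e1 := ih u.size (by omega) (u.rename x z) (u'.rename x' z) (up z e) (insert z S)
          (size_rename u) (up_injOn he z) (free_rename_sub hz.1 hS) (free_rename_sub hz.2 hS')
          (by rw [key x u hz.1, key x' u' hz.2, h])
        exact .trans _ _ _ (.rel _ _ (.here hz.1)) (.trans _ _ _
          (eqvGen_map (fun s => Term.lam z s) (fun _ _ h => .lam h) e1)
          (.symm _ _ (.rel _ _ (.here hz.2))))

theorem rename_ctx (Γ : List ℕ) : ∀ (pre Δ : List ℕ) (t : Term), Δ.length = Γ.length →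
    Δ.Nodup → (∀ y ∈ Δ, y ∉ pre ∧ y ∉ Γ ∧ y ∉ t.varsList) → (pre ++ Γ).Nodup →
    ∃ t', Alpha (pre ++ Γ, t) (pre ++ Δ, t') ∧ canon (pre ++ Δ, t') = canon (pre ++ Γ, t) := by
  induction Γ with
  | nil =>
    intro pre Δ t hl _ _ _
    have : Δ = [] := by simpa using hl
    subst this
    exact ⟨t, .refl _, rfl⟩
  | cons x Γ ih =>
    intro pre Δ t hl hn hd hpn
    cases Δ with
    | nil => simp at hl
    | cons y Δ =>
      have hx := nodup_swap_aux.mp hpn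
      have hy := hd y (by simp)
      simp only [List.mem_cons, not_or] at hy
      have hn' := List.nodup_cons.mp hn
      have hs : Alpha (pre ++ x :: Γ, t) (pre ++ y :: Γ, t.rename x y) :=
        .rel _ _ (.free hy.2.2 hy.1 hy.2.1.2)
      obtain ⟨t', h1, h2⟩ := ih (pre ++ [y]) Δ (t.rename x y) (by simpa using hl) hn'.2 (by
        intro w hw
        have hwd := hd w (by simp [hw])
        have hwy : w ≠ y := by rintro rfl; exact hn'.1 hw
        simp only [List.mem_cons, not_or] at hwd
        refine ⟨by simp [hwd.1, hwy], hwd.2.1.2, ?_⟩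
        intro hwv
        rcases varsList_rename t w hwv with h | h
        · exact hwy h
        · exact hwd.2.2 h) (by
        rw [List.append_assoc, List.singleton_append, nodup_swap_aux]
        exact ⟨hx.1, hy.1, hy.2.1.2⟩)
      simp only [List.append_assoc, List.singleton_append] at h1 h2
      exact ⟨t', .trans _ _ _ hs h1, h2.trans (canon_free hy.2.2 hx.2.1 hy.1)⟩

theorem exists_fresh_list (l : List ℕ) (k : ℕ) :
    ∃ Δ : List ℕ, Δ.length = k ∧ Δ.Nodup ∧ ∀ y ∈ Δ, y ∉ l := by
  induction k with
  | zero => exact ⟨[], by simp⟩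
  | succ k ih =>
    obtain ⟨Δ, h1, h2, h3⟩ := ih
    obtain ⟨z, hz⟩ := exists_fresh (l ++ Δ)
    simp only [List.mem_append, not_or] at hz
    refine ⟨z :: Δ, by simp [h1], by simp [h2, hz.2], ?_⟩
    intro y hy
    rcases List.mem_cons.mp hy with rfl | hy
    · exact hz.1
    · exact h3 y hy

theorem canon_inj {p q : List ℕ × Term} (hp : Linear p.1 p.2) (hq : Linear q.1 q.2)
    (hl : p.1.length = q.1.length) (h : canon p = canon q) : Alpha p q := by
  obtain ⟨Γ, t⟩ := p
  obtain ⟨Γ', u⟩ := q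
  simp only at hp hq hl
  obtain ⟨Δ, h1, h2, h3⟩ :=
    exists_fresh_list (Γ ++ (t.varsList ++ (Γ' ++ u.varsList))) Γ.length
  simp only [List.mem_append, not_or] at h3
  obtain ⟨t', a1, c1⟩ := rename_ctx Γ [] Δ t h1 h2
    (fun y hy => ⟨by simp, (h3 y hy).1, (h3 y hy).2.1⟩) hp.nodup
  obtain ⟨u', a2, c2⟩ := rename_ctx Γ' [] Δ u (h1.trans hl) h2
    (fun y hy => ⟨by simp, (h3 y hy).2.2.1, (h3 y hy).2.2.2⟩) hq.nodup
  simp only [List.nil_append] at a1 a2 c1 c2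
  have l1 : Linear Δ t' := a1.inv.1.mp hp
  have l2 : Linear Δ u' := a2.inv.1.mp hq
  have hb : Relation.EqvGen BoundStep t' u' := by
    refine nf_inj _ t' u' (fun z => Δ.idxOf z) {z | z ∈ Δ} rfl ?_ ?_ ?_ (c1.trans (h.trans c2.symm))
    · intro a ha b hb hab
      exact (List.idxOf_inj ha).mp hab
    · intro a ha
      exact ((linear_iff _ _).mp l1).2.2.mem_iff.mpr ha
    · intro a ha
      exact ((linear_iff _ _).mp l2).2.2.mem_iff.mpr ha
  exact .trans _ _ _ a1 (.trans _ _ _ (eqvGen_map (fun s => (Δ, s)) (fun _ _ h => .bound h) hb)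
    (.symm _ _ a2))

/-! ## The image -/

theorem map_up {x : ℕ} {e : ℕ → ℕ} {Γ : List ℕ} (hx : x ∉ Γ) :
    (Γ ++ [x]).map (up x e) = (Γ.map e).map Nat.succ ++ [0] := by
  have : ∀ a ∈ Γ, up x e a = Nat.succ (e a) := by
    intro a ha
    have : a ≠ x := by rintro rfl; exact hx ha
    simp [up, this]
  rw [List.map_append, List.map_congr_left this]
  simp [up]

theorem map_up_nodup {x : ℕ} {e : ℕ → ℕ} {Γ : List ℕ} (hx : x ∉ Γ) (h : (Γ.map e).Nodup) :
    ((Γ ++ [x]).map (up x e)).Nodup := by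
  rw [map_up hx, List.nodup_append]
  refine ⟨h.map Nat.succ_injective, by simp, ?_⟩
  intro a ha b hb
  simp only [List.mem_map, List.mem_singleton] at ha hb
  obtain ⟨c, _, rfl⟩ := ha
  omega

theorem map_up_toFinset {x : ℕ} {e : ℕ → ℕ} {Γ : List ℕ} (hx : x ∉ Γ) :
    ((Γ ++ [x]).map (up x e)).toFinset = insert 0 ((Γ.map e).toFinset.image Nat.succ) := by
  rw [map_up hx]
  ext a
  simp only [List.mem_toFinset, List.mem_append, List.mem_map, List.mem_singleton,
    Finset.mem_insert, Finset.mem_image]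
  exact or_comm

theorem Linear.dlin {Γ : List ℕ} {t : Term} (h : Linear Γ t) : ∀ e : ℕ → ℕ,
    (Γ.map e).Nodup → (nf e t).DLin (Γ.map e).toFinset := by
  induction h with
  | var x => intro e _; simp [nf, DB.DLin]
  | @app Γ Δ t u _ _ _ ih1 ih2 =>
    intro e he
    rw [List.map_append] at he ⊢
    have hn := List.nodup_append.mp he
    refine ⟨(Γ.map e).toFinset, ?_, ih1 e hn.1, ?_⟩
    · intro a ha
      simp only [List.mem_toFinset, List.mem_append] at ha ⊢
      exact Or.inl ha
    · have : ((Γ.map e) ++ (Δ.map e)).toFinset \ (Γ.map e).toFinset = (Δ.map e).toFinset := by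
        ext a
        simp only [Finset.mem_sdiff, List.mem_toFinset, List.mem_append]
        constructor
        · tauto
        · intro ha
          exact ⟨Or.inr ha, fun ha' => hn.2.2 a ha' a ha rfl⟩
      rw [this]
      exact ih2 e hn.2.1
  | @lam Γ x t h ih =>
    intro e he
    have hx : x ∉ Γ := by
      intro hx
      exact (List.nodup_append.mp h.nodup).2.2 x hx x (by simp) rfl
    have := ih (up x e) (map_up_nodup hx he)
    rw [map_up_toFinset hx] at this
    exact this
  | @exch Γ Δ x y t _ ih =>
    intro e he
    have hp : (Γ ++ x :: y :: Δ).Perm (Γ ++ y :: x :: Δ) :=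
      (List.Perm.swap y x Δ).append_left Γ
    have := ih e ((hp.map e).nodup_iff.mp he)
    rwa [← List.toFinset_eq_of_perm _ _ (hp.map e)] at this

theorem dlin_surj (d : DB) : ∀ (e : ℕ → ℕ) (Γ : List ℕ), (Γ.map e).Nodup →
    d.DLin (Γ.map e).toFinset → ∃ t, Linear Γ t ∧ nf e t = d := by
  induction d with
  | var i =>
    intro e Γ hn hd
    simp only [DB.DLin] at hd
    have hc := congrArg Finset.card hd
    rw [List.toFinset_card_of_nodup hn] at hc
    simp only [List.length_map, Finset.card_singleton] at hc
    obtain ⟨x, rfl⟩ := List.length_eq_one_iff.mp hc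
    refine ⟨.var x, .var x, ?_⟩
    simp only [List.map_cons, List.map_nil, List.toFinset_cons, List.toFinset_nil,
      insert_empty_eq, Finset.singleton_inj] at hd
    simp [nf, hd]
  | app d1 d2 ih1 ih2 =>
    rintro e Γ hn ⟨A, hA, h1, h2⟩
    let Γ1 := Γ.filter (fun x => decide (e x ∈ A))
    let Γ2 := Γ.filter (fun x => !decide (e x ∈ A))
    have hs1 : (Γ1.map e).toFinset = A := by
      ext a
      simp only [Γ1, List.mem_toFinset, List.mem_map, List.mem_filter, decide_eq_true_eq]
      constructor
      · rintro ⟨x, ⟨_, hx⟩, rfl⟩; exact hx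
      · intro ha
        have := hA ha
        simp only [List.mem_toFinset, List.mem_map] at this
        obtain ⟨x, hx, rfl⟩ := this
        exact ⟨x, ⟨hx, ha⟩, rfl⟩
    have hs2 : (Γ2.map e).toFinset = (Γ.map e).toFinset \ A := by
      ext a
      simp only [Γ2, List.mem_toFinset, List.mem_map, List.mem_filter, Finset.mem_sdiff,
        Bool.not_eq_true', decide_eq_false_iff_not]
      constructor
      · rintro ⟨x, ⟨hx, hxA⟩, rfl⟩; exact ⟨⟨x, hx, rfl⟩, hxA⟩
      · rintro ⟨⟨x, hx, rfl⟩, hxA⟩; exact ⟨x, ⟨hx, hxA⟩, rfl⟩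
    have hn1 : (Γ1.map e).Nodup := hn.sublist (List.filter_sublist.map e)
    have hn2 : (Γ2.map e).Nodup := hn.sublist (List.filter_sublist.map e)
    obtain ⟨t, lt, nt⟩ := ih1 e Γ1 hn1 (by rw [hs1]; exact h1)
    obtain ⟨u, lu, nu⟩ := ih2 e Γ2 hn2 (by rw [hs2]; exact h2)
    have hp : (Γ1 ++ Γ2).Perm Γ := List.filter_append_perm _ Γ
    exact ⟨.app t u, Linear.perm hp (.app lt lu (hp.nodup_iff.mpr hn.of_map)), by simp [nf, nt, nu]⟩
  | lam d ih =>
    intro e Γ hn hd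
    obtain ⟨x, hx⟩ := exists_fresh Γ
    obtain ⟨t, lt, nt⟩ := ih (up x e) (Γ ++ [x]) (map_up_nodup hx hn)
      (by rw [map_up_toFinset hx]; exact hd)
    exact ⟨.lam x t, .lam lt, by simp [nf, nt]⟩

theorem map_idxOf {Γ : List ℕ} (h : Γ.Nodup) :
    Γ.map (fun z => Γ.idxOf z) = List.range Γ.length := by
  apply List.ext_getElem
  · simp
  · intro i h1 h2
    simp only [List.length_map] at h1
    simp [h.idxOf_getElem i h1]

theorem map_idxOf_nodup {Γ : List ℕ} (h : Γ.Nodup) : (Γ.map (fun z => Γ.idxOf z)).Nodup := by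
  rw [map_idxOf h]; exact List.nodup_range

theorem map_idxOf_toFinset {Γ : List ℕ} (h : Γ.Nodup) :
    (Γ.map (fun z => Γ.idxOf z)).toFinset = Finset.range Γ.length := by
  rw [map_idxOf h, List.toFinset_range]

theorem tnk_eq_cnt (n k : ℕ) : tnk n k = cnt n k := by
  obtain ⟨F, hF, hc⟩ := exists_enum n (Finset.range k)
  rw [Finset.card_range] at hc
  rw [← hc, ← Nat.card_eq_finsetCard F]
  have hmem : ∀ a : {p : List ℕ × Term // Linear p.1 p.2 ∧ Term.size p.2 = n ∧ p.1.length = k},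
      canon a.val ∈ F := by
    rintro ⟨⟨Γ, t⟩, h1, h2, h3⟩
    simp only at h1 h2 h3
    rw [hF]
    refine ⟨(size_nf t _).trans h2, ?_⟩
    have := h1.dlin _ (map_idxOf_nodup h1.nodup)
    rwa [map_idxOf_toFinset h1.nodup, h3] at this
  refine Nat.card_congr (Equiv.ofBijective
    (Quot.lift (fun a => (⟨canon a.val, hmem a⟩ : F))
      (fun a b h => Subtype.ext ((Alpha.inv h).2 a.property.1))) ⟨?_, ?_⟩)
  · rintro ⟨a⟩ ⟨b⟩ h
    apply Quot.sound
    exact canon_inj a.property.1 b.property.1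
      (a.property.2.2.trans b.property.2.2.symm) (congrArg Subtype.val h)
  · rintro ⟨d, hd⟩
    have hd' := (hF d).mp hd
    have hn : (List.range k).Nodup := List.nodup_range
    obtain ⟨t, lt, nt⟩ := dlin_surj d (fun z => (List.range k).idxOf z) (List.range k)
      (map_idxOf_nodup hn) (by rw [map_idxOf_toFinset hn, List.length_range]; exact hd'.2)
    refine ⟨Quot.mk _ ⟨(List.range k, t), lt, ?_, List.length_range⟩, Subtype.ext nt⟩
    rw [← size_nf t (fun z => (List.range k).idxOf z), nt]
    exact hd'.1

/-- The counting sequence of linear lambda terms satisfies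
`t_{0,k} = [k = 1]` and
`t_{n+1,k} = Σ_{n₁+n₂=n} Σ_{k₁+k₂=k} C(k,k₁)·t_{n₁,k₁}·t_{n₂,k₂} + t_{n,k+1}`
(equivalently, the exponential-type generating function satisfies
`L = x + z·L² + z·∂L/∂x`). -/
theorem tnk_recurrence :
    (∀ k : ℕ, tnk 0 k = if k = 1 then 1 else 0) ∧
    (∀ n k : ℕ, tnk (n + 1) k =
      (∑ i ∈ Finset.range (n + 1), ∑ j ∈ Finset.range (k + 1),
        Nat.choose k j * tnk i j * tnk (n - i) (k - j)) + tnk n (k + 1)) := by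

  refine ⟨fun k => by rw [tnk_eq_cnt, cnt], fun n k => ?_⟩
  simp only [tnk_eq_cnt]
  rw [cnt, Finset.sum_range]
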